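/- Let C be a normal, closed cone with nonempty interior in a real Banach space. If f : int C → int C is nonexpansive with respect to Thompson's metric d_T, is either γ-condensing or τ-condensing, and has at least one fixed point, then the fixed point set Fix(f) is a d_T-nonexpansive retract of int C; that is, there exists a map r : int C → int C with d_T(r(x),r(y)) ≤ d_T(x,y) for all x,y ∈ int C, r(int C) = Fix(f), and r(x) = x for every x ∈ Fix(f). -/

import Mathlib

/-!
For `u, v` in the interior of the cone and `β ≥ 1`, `d_T(u,v) ≤ log β` means `u ≤ β v` and `v ≤ β u`
(`TRel C β u v`).  These conditions are preserved by convex combinations and by norm limits.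
For `x ∈ int C` and `t ∈ (0,1]` let `T_x y = (1-t) f(y) + t x`.

* On the order interval `[K⁻¹ p, K p]` around a fixed point `p` of `f`, the map `T_x` shrinks
  `β - 1` by a factor `1 - t/K²` (`TRel.step_contract`), so by normality the iterates `T_x^k x`
  converge in norm to a fixed point `J_t x` of `T_x`
  (`exists_resolvent_limit`).  The map `J_t` is `d_T`-nonexpansive, because `T_x y` is jointly
  nonexpansive in `(x, y)`, and it fixes every fixed point of `f`.
* As `t → 0`, `d_T(J_t x, f (J_t x)) → 0`.  Hence the sequence `A = (J_{t_n} x)_n` has measure of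
  noncompactness at most that of `f(A)` (`genMNC_range_le`), and since `f` is condensing,
  `A` is relatively compact in norm (`totallyBounded_of_condensing`).
* The limit of `J_{t_n} x` along a fixed nonprincipal ultrafilter therefore exists for every `x`;
  it is a fixed point of `f`, it depends on `x` nonexpansively, and it is `x` if `f x = x`.
-/


open Filter Topology Bornology

section ConeDefs

variable {X : Type*} [NormedAddCommGroup X] [NormedSpace ℝ X]

/-- `C` is a closed cone: a closed convex set with `l • C ⊆ C` for `l ≥ 0` and `C ∩ (-C) = {0}`. -/
def IsClosedCone (C : Set X) : Prop :=
  IsClosed C ∧ Convex ℝ C ∧ (∀ l : ℝ, 0 ≤ l → ∀ x ∈ C, l • x ∈ C) ∧ C ∩ (-C) = {0}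

/-- `C` is a normal cone: `0 ≤ x ≤ y` implies `‖x‖ ≤ κ * ‖y‖`. -/
def IsNormalCone (C : Set X) : Prop :=
  ∃ κ : ℝ, ∀ x y : X, x ∈ C → y - x ∈ C → ‖x‖ ≤ κ * ‖y‖

/-- `C` is a regular cone: every decreasing sequence in `C` converges in norm. -/
def IsRegularCone (C : Set X) : Prop :=
  ∀ x : ℕ → X, (∀ n, x n ∈ C) → (∀ n, x n - x (n + 1) ∈ C) →
    ∃ l : X, Tendsto x atTop (𝓝 l)

/-- Thompson's metric: `d_T(x,y) = log inf {β ≥ 1 : β⁻¹ • x ≤ y ∧ y ≤ β • x}`,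
where `≤` is the order induced by the cone `C`. -/
noncomputable def thompsonDist (C : Set X) (x y : X) : ℝ :=
  Real.log (sInf {β : ℝ | 1 ≤ β ∧ y - β⁻¹ • x ∈ C ∧ β • x - y ∈ C})

/-- `A` is bounded in Thompson's metric. -/
def TBounded (C A : Set X) : Prop :=
  ∃ d : ℝ, ∀ x ∈ A, ∀ y ∈ A, thompsonDist C x y ≤ d

/-- Kuratowski's measure of noncompactness for the norm:
the infimum of all `d > 0` such that `A` admits a finite cover by sets of diameter at most `d`. -/
noncomputable def kuratowski (A : Set X) : ℝ :=
  sInf {d : ℝ | 0 < d ∧ ∃ (n : ℕ) (S : Fin n → Set X), A ⊆ ⋃ i, S i ∧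
    ∀ i, IsBounded (S i) ∧ Metric.diam (S i) ≤ d}

/-- Kuratowski's measure of noncompactness for Thompson's metric: the infimum of all `d > 0`
such that `A` admits a finite cover by subsets of `interior C` of `d_T`-diameter at most `d`. -/
noncomputable def tauMNC (C A : Set X) : ℝ :=
  sInf {d : ℝ | 0 < d ∧ ∃ (n : ℕ) (S : Fin n → Set X), A ⊆ ⋃ i, S i ∧
    ∀ i, S i ⊆ interior C ∧ ∀ x ∈ S i, ∀ y ∈ S i, thompsonDist C x y ≤ d}

/-- `f` is continuous and `γ`-condensing on `D`. -/
def GammaCondensing {X : Type*} [NormedAddCommGroup X] [NormedSpace ℝ X]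
    (f : X → X) (D : Set X) : Prop :=
  ContinuousOn f D ∧ ∀ A ⊆ D, IsBounded A → 0 < kuratowski A →
    kuratowski (f '' A) < kuratowski A

/-- `f` is continuous and `τ`-condensing on `D`. -/
def TauCondensing (C : Set X) (f : X → X) (D : Set X) : Prop :=
  ContinuousOn f D ∧ ∀ A ⊆ D, TBounded C A → 0 < tauMNC C A →
    tauMNC C (f '' A) < tauMNC C A

/-- `f` is nonexpansive with respect to Thompson's metric on `D`. -/
def TNonexpansiveOn (C : Set X) (f : X → X) (D : Set X) : Prop :=
  ∀ x ∈ D, ∀ y ∈ D, thompsonDist C (f x) (f y) ≤ thompsonDist C x y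

/-- `f` is order-preserving on `D` for the order induced by `C`. -/
def OrderPreservingOn (C : Set X) (f : X → X) (D : Set X) : Prop :=
  ∀ x ∈ D, ∀ y ∈ D, y - x ∈ C → f y - f x ∈ C

/-- `f` is subhomogeneous on `D`: `f (t • x) ≤ t • f x` for `t ≥ 1`. -/
def SubhomogeneousOn (C : Set X) (f : X → X) (D : Set X) : Prop :=
  ∀ t : ℝ, 1 ≤ t → ∀ x ∈ D, t • f x - f (t • x) ∈ C

/-- `M(x/y) = inf {β > 0 : x ≤ β • y}`, valued in `ℝ≥0∞` (`⊤` if no such `β` exists). -/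
noncomputable def Mratio (C : Set X) (x y : X) : ENNReal :=
  sInf {b : ENNReal | ∃ β : ℝ, 0 < β ∧ b = ENNReal.ofReal β ∧ β • y - x ∈ C}

/-- `m(x/y) = sup {α > 0 : α • y ≤ x}`, valued in `ℝ≥0∞`. -/
noncomputable def mratio (C : Set X) (x y : X) : ENNReal :=
  sSup {b : ENNReal | ∃ α : ℝ, 0 < α ∧ b = ENNReal.ofReal α ∧ x - α • y ∈ C}

/-- The upper Collatz–Wielandt number `r(f) = inf_{x ∈ int C} M(f(x)/x)`. -/
noncomputable def upperCW (C : Set X) (f : X → X) : ENNReal :=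
  ⨅ x ∈ interior C, Mratio C (f x) x

/-- The lower Collatz–Wielandt number `λ(f) = sup_{x ∈ int C} m(f(x)/x)`. -/
noncomputable def lowerCW (C : Set X) (f : X → X) : ENNReal :=
  ⨆ x ∈ interior C, mratio C (f x) x

/-- The order-unit norm `‖x‖_u = inf {k > 0 : -k • u ≤ x ≤ k • u}`. -/
noncomputable def orderUnitNorm (C : Set X) (u x : X) : ℝ :=
  sInf {k : ℝ | 0 < k ∧ x + k • u ∈ C ∧ k • u - x ∈ C}

end ConeDefs

/-! ### The order relation behind Thompson's metric -/

section Aux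

variable {X : Type*} [NormedAddCommGroup X] [NormedSpace ℝ X] {C : Set X}

/-- `x ≤ β • y` and `y ≤ β • x` in the order induced by `C`. For `x, y` in the interior and
`1 ≤ β` this says that `d_T(x,y) ≤ log β`. -/
def TRel (C : Set X) (β : ℝ) (x y : X) : Prop :=
  β • x - y ∈ C ∧ β • y - x ∈ C

theorem IsClosedCone.smul_mem (hC : IsClosedCone C) {l : ℝ} (hl : 0 ≤ l) {x : X} (hx : x ∈ C) :
    l • x ∈ C := hC.2.2.1 l hl x hx

theorem IsClosedCone.add_mem (hC : IsClosedCone C) {x y : X} (hx : x ∈ C) (hy : y ∈ C) :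
    x + y ∈ C := by
  have h := hC.2.1 hx hy (by norm_num : (0 : ℝ) ≤ 1 / 2) (by norm_num : (0 : ℝ) ≤ 1 / 2)
    (by norm_num)
  have h2 := hC.smul_mem (by norm_num : (0 : ℝ) ≤ 2) h
  convert h2 using 1
  module

theorem IsClosedCone.mem_interior_of_le (hC : IsClosedCone C) {p y : X} (hp : p ∈ interior C)
    {K : ℝ} (hK : 0 < K) (h : K • y - p ∈ C) : y ∈ interior C := by
  rw [mem_interior]
  refine ⟨{z | K • z - (K • y - p) ∈ interior C}, ?_, ?_, ?_⟩
  · intro z hz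
    have h1 := hC.smul_mem (inv_nonneg.2 hK.le) (hC.add_mem (interior_subset hz) h)
    rwa [sub_add_cancel, smul_smul, inv_mul_cancel₀ hK.ne', one_smul] at h1
  · exact isOpen_interior.preimage (by fun_prop)
  · simpa using hp

theorem exists_le_of_interior (hC : IsClosedCone C) {x : X} (hx : x ∈ interior C) (y : X) :
    ∃ K₀ : ℝ, ∀ K, K₀ ≤ K → K • x - y ∈ C := by
  have hc : Tendsto (fun e : ℝ => x - e • y) (𝓝[>] 0) (𝓝 x) := by
    have : Continuous (fun e : ℝ => x - e • y) := by fun_prop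
    have h := this.tendsto 0
    simp only [zero_smul, sub_zero] at h
    exact h.mono_left nhdsWithin_le_nhds
  obtain ⟨e, he, he0⟩ :=
    ((hc.eventually (mem_interior_iff_mem_nhds.1 hx)).and self_mem_nhdsWithin).exists
  have he0 : 0 < e := he0
  refine ⟨e⁻¹, fun K hK => ?_⟩
  have h1 := hC.add_mem (hC.smul_mem (inv_nonneg.2 he0.le) he)
    (hC.smul_mem (sub_nonneg.2 hK) (interior_subset hx))
  convert h1 using 1
  rw [smul_sub, smul_smul, inv_mul_cancel₀ he0.ne']
  module

theorem exists_trel (hC : IsClosedCone C) {x y : X} (hx : x ∈ interior C) (hy : y ∈ interior C) :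
    ∃ K : ℝ, 1 ≤ K ∧ TRel C K x y := by
  obtain ⟨a, ha⟩ := exists_le_of_interior hC hx y
  obtain ⟨b, hb⟩ := exists_le_of_interior hC hy x
  exact ⟨max 1 (max a b), le_max_left _ _, ha _ (by simp), hb _ (by simp)⟩

theorem TRel.symm {β : ℝ} {x y : X} (h : TRel C β x y) : TRel C β y x := ⟨h.2, h.1⟩

theorem TRel.mono (hC : IsClosedCone C) {β β' : ℝ} {x y : X} (hx : x ∈ C) (hy : y ∈ C)
    (h : TRel C β x y) (hb : β ≤ β') : TRel C β' x y := by
  constructor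
  · have := hC.add_mem h.1 (hC.smul_mem (sub_nonneg.2 hb) hx)
    convert this using 1
    module
  · have := hC.add_mem h.2 (hC.smul_mem (sub_nonneg.2 hb) hy)
    convert this using 1
    module

theorem TRel.mul (hC : IsClosedCone C) {a b : ℝ} {x y z : X} (ha : 0 ≤ a) (hb : 0 ≤ b)
    (h : TRel C a x y) (h' : TRel C b y z) : TRel C (a * b) x z := by
  constructor
  · have := hC.add_mem (hC.smul_mem hb h.1) h'.1
    convert this using 1
    module
  · have := hC.add_mem (hC.smul_mem ha h'.2) h.2
    convert this using 1
    module

theorem trel_self (hC : IsClosedCone C) {β : ℝ} (hb : 1 ≤ β) {x : X} (hx : x ∈ C) :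
    TRel C β x x := by
  have := hC.smul_mem (sub_nonneg.2 hb) hx
  have h2 : β • x - x ∈ C := by
    convert this using 1
    module
  exact ⟨h2, h2⟩

/-- Joint nonexpansiveness of convex combinations, as Thompson balls are order intervals. -/
theorem TRel.comb (hC : IsClosedCone C) {β t : ℝ} {a b c d : X} (ht0 : 0 ≤ t) (ht1 : t ≤ 1)
    (h : TRel C β a b) (h' : TRel C β c d) :
    TRel C β ((1 - t) • a + t • c) ((1 - t) • b + t • d) := by
  have h1 : 0 ≤ 1 - t := by linarith
  constructor
  · have := hC.add_mem (hC.smul_mem h1 h.1) (hC.smul_mem ht0 h'.1)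
    convert this using 1
    module
  · have := hC.add_mem (hC.smul_mem h1 h.2) (hC.smul_mem ht0 h'.2)
    convert this using 1
    module

theorem TRel.of_tendsto (hC : IsClosedCone C) {ι : Type*} {l : Filter ι} [l.NeBot] {β : ℝ}
    {u v : ι → X} {a b : X} (hu : Tendsto u l (𝓝 a)) (hv : Tendsto v l (𝓝 b))
    (h : ∀ i, TRel C β (u i) (v i)) : TRel C β a b :=
  ⟨hC.1.mem_of_tendsto ((hu.const_smul β).sub hv) (Eventually.of_forall fun i => (h i).1),
    hC.1.mem_of_tendsto ((hv.const_smul β).sub hu) (Eventually.of_forall fun i => (h i).2)⟩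

theorem thompsonDist_eq (hC : IsClosedCone C) (x y : X) :
    thompsonDist C x y = Real.log (sInf {β : ℝ | 1 ≤ β ∧ TRel C β x y}) := by
  unfold thompsonDist
  congr 2
  ext β
  simp only [Set.mem_ofPred_eq, TRel]
  refine and_congr_right fun hb => ?_
  have hb0 : 0 < β := by linarith
  rw [and_comm]
  refine and_congr_right fun _ => ⟨fun h => ?_, fun h => ?_⟩
  · have := hC.smul_mem hb0.le h
    rwa [smul_sub, smul_smul, mul_inv_cancel₀ hb0.ne', one_smul] at this
  · have := hC.smul_mem (inv_nonneg.2 hb0.le) h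
    rwa [smul_sub, smul_smul, inv_mul_cancel₀ hb0.ne', one_smul] at this

/-- The infimum defining Thompson's metric is attained, since the cone is closed. -/
theorem sInf_trel_mem (hC : IsClosedCone C) {x y : X} (hx : x ∈ interior C)
    (hy : y ∈ interior C) :
    sInf {β : ℝ | 1 ≤ β ∧ TRel C β x y} ∈ {β : ℝ | 1 ≤ β ∧ TRel C β x y} := by
  refine IsClosed.csInf_mem ?_ (exists_trel hC hx hy) ⟨1, fun b hb => hb.1⟩
  refine isClosed_Ici.inter (IsClosed.inter ?_ ?_)
  · exact hC.1.preimage (f := fun β : ℝ => β • x - y) (by fun_prop)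
  · exact hC.1.preimage (f := fun β : ℝ => β • y - x) (by fun_prop)

theorem thompsonDist_nonneg (hC : IsClosedCone C) {x y : X} (hx : x ∈ interior C)
    (hy : y ∈ interior C) : 0 ≤ thompsonDist C x y := by
  rw [thompsonDist_eq hC]
  exact Real.log_nonneg (sInf_trel_mem hC hx hy).1

theorem thompsonDist_le_iff (hC : IsClosedCone C) {x y : X} (hx : x ∈ interior C)
    (hy : y ∈ interior C) {b : ℝ} (hb : 0 ≤ b) :
    thompsonDist C x y ≤ b ↔ TRel C (Real.exp b) x y := by
  have hm := sInf_trel_mem hC hx hy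
  rw [thompsonDist_eq hC, Real.log_le_iff_le_exp (by linarith [hm.1])]
  constructor
  · exact fun h => hm.2.mono hC (interior_subset hx) (interior_subset hy) h
  · exact fun h => csInf_le ⟨1, fun b hb => hb.1⟩ ⟨Real.one_le_exp hb, h⟩

theorem thompsonDist_comm (hC : IsClosedCone C) (x y : X) :
    thompsonDist C x y = thompsonDist C y x := by
  rw [thompsonDist_eq hC, thompsonDist_eq hC]
  congr 2
  ext β
  simp only [Set.mem_ofPred_eq, TRel]
  tauto

theorem thompsonDist_triangle (hC : IsClosedCone C) {x y z : X} (hx : x ∈ interior C)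
    (hy : y ∈ interior C) (hz : z ∈ interior C) :
    thompsonDist C x z ≤ thompsonDist C x y + thompsonDist C y z := by
  have h1 := thompsonDist_nonneg hC hx hy
  have h2 := thompsonDist_nonneg hC hy hz
  rw [thompsonDist_le_iff hC hx hz (add_nonneg h1 h2), Real.exp_add]
  exact ((thompsonDist_le_iff hC hx hy h1).1 le_rfl).mul hC (Real.exp_pos _).le
    (Real.exp_pos _).le ((thompsonDist_le_iff hC hy hz h2).1 le_rfl)

theorem TNonexpansiveOn.trel (hC : IsClosedCone C) {f : X → X}
    (hf : Set.MapsTo f (interior C) (interior C)) (hfn : TNonexpansiveOn C f (interior C))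
    {x y : X} (hx : x ∈ interior C) (hy : y ∈ interior C) {β : ℝ} (hb : 1 ≤ β)
    (h : TRel C β x y) : TRel C β (f x) (f y) := by
  have hl : 0 ≤ Real.log β := Real.log_nonneg hb
  have he : Real.exp (Real.log β) = β := Real.exp_log (by linarith)
  have h1 : thompsonDist C x y ≤ Real.log β := by
    rw [thompsonDist_le_iff hC hx hy hl, he]
    exact h
  have h2 := (thompsonDist_le_iff hC (hf hx) (hf hy) hl).1 ((hfn x hx y hy).trans h1)
  rwa [he] at h2

theorem tnonexpansiveOn_of_trel (hC : IsClosedCone C) {f : X → X}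
    (hf : Set.MapsTo f (interior C) (interior C))
    (h : ∀ x ∈ interior C, ∀ y ∈ interior C, ∀ β, 1 ≤ β → TRel C β x y → TRel C β (f x) (f y)) :
    TNonexpansiveOn C f (interior C) := by
  intro x hx y hy
  have h1 := thompsonDist_nonneg hC hx hy
  rw [thompsonDist_le_iff hC (hf hx) (hf hy) h1]
  exact h x hx y hy _ (Real.one_le_exp h1) ((thompsonDist_le_iff hC hx hy h1).1 le_rfl)

/-- Normality turns order estimates on an order interval into norm estimates. -/
theorem TRel.norm_sub_le (hC : IsClosedCone C) {κ : ℝ}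
    (hκ : ∀ x y : X, x ∈ C → y - x ∈ C → ‖x‖ ≤ κ * ‖y‖) {s K : ℝ} (hs : 0 ≤ s) (hK : 0 ≤ K)
    {p u v : X} (h : TRel C (1 + s) u v) (hu : K • p - u ∈ C) (hv : K • p - v ∈ C) :
    ‖u - v‖ ≤ ((2 * κ + 1) * K * ‖p‖) * s := by
  set w : X := (s * K) • p with hw
  have h1 : w + (u - v) ∈ C := by
    have := hC.add_mem h.1 (hC.smul_mem hs hu)
    convert this using 1
    rw [hw]
    module
  have h2 : (2 : ℝ) • w - (w + (u - v)) ∈ C := by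
    have := hC.add_mem h.2 (hC.smul_mem hs hv)
    convert this using 1
    rw [hw]
    module
  have h3 := hκ (w + (u - v)) ((2 : ℝ) • w) h1 h2
  have h4 : ‖u - v‖ ≤ ‖w + (u - v)‖ + ‖w‖ := by
    have := _root_.norm_sub_le (w + (u - v)) w
    rwa [add_sub_cancel_left] at this
  have h5 : ‖w‖ = s * K * ‖p‖ := by
    rw [hw, norm_smul, Real.norm_of_nonneg (mul_nonneg hs hK)]
  have h6 : ‖(2 : ℝ) • w‖ = 2 * (s * K * ‖p‖) := by
    rw [norm_smul, h5, Real.norm_of_nonneg (by norm_num)]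
  rw [h6] at h3
  rw [h5] at h4
  linarith

/-! ### The resolvents -/

/-- `y ↦ (1 - t) f(y) + t x`, whose fixed point is the resolvent of `f` at `x`. -/
def resStep (f : X → X) (t : ℝ) (x y : X) : X := (1 - t) • f y + t • x

theorem TRel.resStep (hC : IsClosedCone C) {f : X → X}
    (hf : Set.MapsTo f (interior C) (interior C)) (hfn : TNonexpansiveOn C f (interior C))
    {t : ℝ} (ht0 : 0 ≤ t) (ht1 : t ≤ 1) {x x' y y' : X} {β : ℝ} (hb : 1 ≤ β)
    (hy : y ∈ interior C) (hy' : y' ∈ interior C)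
    (hx : TRel C β x x') (h : TRel C β y y') :
    TRel C β (resStep f t x y) (resStep f t x' y') :=
  (hfn.trel hC hf hy hy' hb h).comb hC ht0 ht1 hx

theorem resStep_fix {f : X → X} {t : ℝ} {q : X} (hq : f q = q) : resStep f t q q = q := by
  unfold resStep
  rw [hq]
  module

theorem TRel.resStep_fix (hC : IsClosedCone C) {f : X → X}
    (hf : Set.MapsTo f (interior C) (interior C)) (hfn : TNonexpansiveOn C f (interior C))
    {t : ℝ} (ht0 : 0 ≤ t) (ht1 : t ≤ 1) {p x y : X} {K : ℝ} (hK : 1 ≤ K)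
    (hp : p ∈ interior C) (hfp : f p = p) (hy : y ∈ interior C)
    (hx : TRel C K p x) (h : TRel C K p y) : TRel C K p (_root_.resStep f t x y) := by
  have := TRel.resStep hC hf hfn ht0 ht1 hK hp hy hx h
  rwa [_root_.resStep_fix hfp] at this

/-- If the values stay below a multiple of `x`, then a step contracts `β - 1`: the common
summand `t • x` does not get multiplied by `β`. -/
theorem TRel.step_contract (hC : IsClosedCone C) {f : X → X} {t : ℝ} (ht0 : 0 ≤ t) (ht1 : t ≤ 1)
    {x y y' : X} {s e : ℝ} (hs : 0 ≤ s) (h : TRel C (1 + s) (f y) (f y'))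
    (hx : x - e • _root_.resStep f t x y ∈ C) (hx' : x - e • _root_.resStep f t x y' ∈ C) :
    TRel C (1 + (1 - t * e) * s) (_root_.resStep f t x y) (_root_.resStep f t x y') := by
  have h1 : 0 ≤ 1 - t := by linarith
  constructor
  · have := hC.add_mem (hC.smul_mem h1 h.1) (hC.smul_mem (mul_nonneg ht0 hs) hx)
    convert this using 1
    unfold _root_.resStep
    module
  · have := hC.add_mem (hC.smul_mem h1 h.2) (hC.smul_mem (mul_nonneg ht0 hs) hx')
    convert this using 1
    unfold _root_.resStep
    module

theorem trel_iterate (hC : IsClosedCone C) {f : X → X}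
    (hf : Set.MapsTo f (interior C) (interior C)) (hfn : TNonexpansiveOn C f (interior C))
    {t : ℝ} (ht0 : 0 ≤ t) (ht1 : t ≤ 1) {p x : X} {K : ℝ} (hK : 1 ≤ K)
    (hp : p ∈ interior C) (hfp : f p = p) (hx : TRel C K p x) (k : ℕ) :
    TRel C K p ((resStep f t x)^[k] x) := by
  induction k with
  | zero => exact hx
  | succ k ih =>
    rw [Function.iterate_succ_apply']
    exact TRel.resStep_fix hC hf hfn ht0 ht1 hK hp hfp
      (hC.mem_interior_of_le hp (by linarith) ih.2) hx ih

/-- By normality the iterates, contracting in Thompson's metric, form a norm Cauchy sequence. -/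
theorem exists_resolvent_limit [CompleteSpace X] (hC : IsClosedCone C) (hnorm : IsNormalCone C)
    {f : X → X} (hf : Set.MapsTo f (interior C) (interior C))
    (hfn : TNonexpansiveOn C f (interior C)) (hcont : ContinuousOn f (interior C))
    {t : ℝ} (ht0 : 0 < t) (ht1 : t ≤ 1) {p x : X} {K : ℝ} (hK : 1 ≤ K)
    (hp : p ∈ interior C) (hfp : f p = p) (hx : TRel C K p x) :
    ∃ u, Tendsto (fun k => (resStep f t x)^[k] x) atTop (𝓝 u) ∧ TRel C K p u ∧
      resStep f t x u = u := by
  obtain ⟨κ, hκ⟩ := hnorm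
  have hK0 : 0 < K := by linarith
  set y : ℕ → X := fun k => (resStep f t x)^[k] x with hy
  have hys : ∀ k, y (k + 1) = resStep f t x (y k) := fun k => Function.iterate_succ_apply' _ _ _
  have hyK : ∀ k, TRel C K p (y k) := trel_iterate hC hf hfn ht0.le ht1 hK hp hfp hx
  have hyI : ∀ k, y k ∈ interior C := fun k => hC.mem_interior_of_le hp hK0 (hyK k).2
  set e : ℝ := (K * K)⁻¹ with he
  have hKK : 1 ≤ K * K := by nlinarith
  have he0 : 0 < e := by positivity
  have he1 : e ≤ 1 := inv_le_one_of_one_le₀ hKK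
  have hxy : ∀ k, x - e • y k ∈ C := by
    intro k
    have h1 := hC.smul_mem he0.le ((hx.symm.mul hC hK0.le hK0.le (hyK k)).1)
    rwa [smul_sub, smul_smul, he, inv_mul_cancel₀ (by positivity), one_smul] at h1
  set c : ℝ := 1 - t * e with hc
  have hc0 : 0 ≤ c := by nlinarith
  have hc1 : c < 1 := by nlinarith [mul_pos ht0 he0]
  have hs0 : 0 ≤ K * K - 1 := by linarith
  have hstep : ∀ k, TRel C (1 + c ^ k * (K * K - 1)) (y k) (y (k + 1)) := by
    intro k
    induction k with
    | zero =>
      have := (hyK 0).symm.mul hC hK0.le hK0.le (hyK 1)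
      simpa using this
    | succ k ih =>
      have hsk : 0 ≤ c ^ k * (K * K - 1) := mul_nonneg (pow_nonneg hc0 k) hs0
      have h1 := hfn.trel hC hf (hyI k) (hyI (k + 1)) (by linarith) ih
      have h2 := TRel.step_contract hC ht0.le ht1 (x := x) (e := e) hsk h1
        (by rw [← hys]; exact hxy _) (by rw [← hys]; exact hxy _)
      rw [← hys, ← hys] at h2
      rw [pow_succ', mul_assoc]
      exact h2
  have hdist : ∀ k, dist (y k) (y (k + 1)) ≤ ((2 * κ + 1) * K * ‖p‖ * (K * K - 1)) * c ^ k := by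
    intro k
    rw [dist_eq_norm]
    have := (hstep k).norm_sub_le hC hκ (mul_nonneg (pow_nonneg hc0 k) hs0) hK0.le
      (hyK k).1 (hyK (k + 1)).1
    linarith
  obtain ⟨u, hu⟩ := cauchySeq_tendsto_of_complete (cauchySeq_of_le_geometric c _ hc1 hdist)
  have huK : TRel C K p u := TRel.of_tendsto hC tendsto_const_nhds hu hyK
  have huI : u ∈ interior C := hC.mem_interior_of_le hp hK0 huK.2
  refine ⟨u, hu, huK, ?_⟩
  have h1 : Tendsto (fun k => f (y k)) atTop (𝓝 (f u)) :=
    ((hcont u huI).continuousAt (isOpen_interior.mem_nhds huI)).tendsto.comp hu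
  have h2 : Tendsto (fun k => y (k + 1)) atTop (𝓝 (resStep f t x u)) := by
    simp only [hys]
    exact (h1.const_smul (1 - t)).add tendsto_const_nhds
  exact tendsto_nhds_unique h2 (hu.comp (tendsto_add_atTop_nat 1))

/-- The resolvents are asymptotically fixed by `f` as `t → 0`, as `u - f u = t • (x - f u)`. -/
theorem trel_resolvent (hC : IsClosedCone C) {f : X → X} {t : ℝ} (ht0 : 0 ≤ t)
    {x u : X} {M : ℝ} (hu : resStep f t x u = u) (hx : TRel C M x (f u))
    (hfu : TRel C M u (f u)) (hfC : f u ∈ C) (hxC : x ∈ C) :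
    TRel C (1 + t * M) u (f u) := by
  have hu' : u - f u = t • x - t • f u := by
    rw [sub_eq_iff_eq_add]
    nth_rewrite 1 [← hu]
    unfold resStep
    module
  constructor
  · have := hC.add_mem (hC.smul_mem ht0 hfu.1) (hC.smul_mem ht0 hxC)
    have e1 : (1 + t * M) • u - f u = (u - f u) + (t * M) • u := by module
    rw [e1, hu']
    convert this using 1
    module
  · have := hC.add_mem (hC.smul_mem ht0 hx.2) (hC.smul_mem ht0 hfC)
    have e1 : (1 + t * M) • f u - u = -(u - f u) + (t * M) • f u := by module
    rw [e1, hu']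
    convert this using 1
    module

/-! ### Measures of noncompactness -/

/-- Kuratowski's measure of noncompactness for a distance function `δ` on a set `D`; both
`kuratowski` and `tauMNC` are instances. -/
noncomputable def genMNC (δ : X → X → ℝ) (D A : Set X) : ℝ :=
  sInf {d : ℝ | 0 < d ∧ ∃ (n : ℕ) (S : Fin n → Set X), A ⊆ ⋃ i, S i ∧
    ∀ i, S i ⊆ D ∧ ∀ x ∈ S i, ∀ y ∈ S i, δ x y ≤ d}

theorem kuratowski_eq (A : Set X) : kuratowski A = genMNC dist Set.univ A := by
  unfold kuratowski genMNC
  congr 1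
  ext d
  refine and_congr_right fun hd => exists_congr fun n => exists_congr fun S =>
    and_congr_right fun _ => forall_congr' fun i => ⟨fun h => ?_, fun h => ?_⟩
  · exact ⟨Set.subset_univ _, fun x hx y hy => (Metric.dist_le_diam_of_mem h.1 hx hy).trans h.2⟩
  · exact ⟨Metric.isBounded_iff.2 ⟨d, fun x hx y hy => h.2 x hx y hy⟩,
      Metric.diam_le_of_forall_dist_le hd.le h.2⟩

theorem genMNC_le {δ : X → X → ℝ} {D A : Set X} {d : ℝ} (hd : 0 < d) {ι : Type*} [Fintype ι]
    (S : ι → Set X) (hA : A ⊆ ⋃ i, S i)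
    (hS : ∀ i, S i ⊆ D ∧ ∀ x ∈ S i, ∀ y ∈ S i, δ x y ≤ d) : genMNC δ D A ≤ d := by
  refine csInf_le ⟨0, fun b hb => hb.1.le⟩ ⟨hd, Fintype.card ι,
    fun i => S ((Fintype.equivFin ι).symm i), fun a ha => ?_, fun i => hS _⟩
  obtain ⟨i, hi⟩ := Set.mem_iUnion.1 (hA ha)
  exact Set.mem_iUnion.2 ⟨Fintype.equivFin ι i, by simpa using hi⟩

/-- A sequence asymptotic to a bounded one has at most the same measure of noncompactness. -/
theorem genMNC_range_le {δ : X → X → ℝ} {D : Set X} (hself : ∀ x ∈ D, δ x x ≤ 0)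
    (hsymm : ∀ x y, δ x y = δ y x)
    (htri : ∀ x ∈ D, ∀ y ∈ D, ∀ z ∈ D, δ x z ≤ δ x y + δ y z)
    {y z : ℕ → X} (hy : ∀ n, y n ∈ D) (hz : ∀ n, z n ∈ D)
    (hyz : ∀ η > 0, ∀ᶠ n in atTop, δ (y n) (z n) ≤ η)
    (hbdd : ∃ b, ∀ m n, δ (z m) (z n) ≤ b) :
    genMNC δ D (Set.range y) ≤ genMNC δ D (Set.range z) := by
  refine le_csInf ?_ ?_
  · obtain ⟨b, hb⟩ := hbdd
    refine ⟨max b 1, by positivity, 1, fun _ => Set.range z,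
      fun a ha => Set.mem_iUnion.2 ⟨0, ha⟩, fun _ => ⟨?_, ?_⟩⟩
    · rintro _ ⟨n, rfl⟩
      exact hz n
    · rintro _ ⟨n, rfl⟩ _ ⟨m, rfl⟩
      exact (hb n m).trans (le_max_left _ _)
  · rintro d ⟨hd, n, S, hcov, hS⟩
    refine le_of_forall_pos_le_add fun η hη => ?_
    obtain ⟨N, hN⟩ := eventually_atTop.1 (hyz (η / 2) (half_pos hη))
    -- The first `N` terms are covered by singletons, the others by thickenings of the `S i`.
    refine genMNC_le (by linarith)
      (Sum.elim (fun i : Fin n => {a | a ∈ D ∧ ∃ w ∈ S i, δ a w ≤ η / 2})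
        (fun j : Fin N => {y j})) ?_ ?_
    · rintro _ ⟨k, rfl⟩
      by_cases hk : k < N
      · exact Set.mem_iUnion.2 ⟨Sum.inr ⟨k, hk⟩, rfl⟩
      · obtain ⟨i, hi⟩ := Set.mem_iUnion.1 (hcov ⟨k, rfl⟩)
        exact Set.mem_iUnion.2 ⟨Sum.inl i, hy k, z k, hi, hN k (not_lt.1 hk)⟩
    · rintro (i | j)
      · refine ⟨fun a ha => ha.1, ?_⟩
        rintro a ⟨ha, w, hw, haw⟩ b ⟨hb, v, hv, hbv⟩
        have hwD := (hS i).1 hw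
        have hvD := (hS i).1 hv
        have h1 := htri a ha w hwD b hb
        have h2 := htri w hwD v hvD b hb
        have h3 := (hS i).2 w hw v hv
        have h4 := hsymm v b
        linarith
      · refine ⟨?_, ?_⟩
        · rintro _ rfl
          exact hy j
        · rintro _ rfl _ rfl
          linarith [hself _ (hy j)]

theorem exists_cover_of_genMNC_eq_zero {δ : X → X → ℝ} {D A : Set X} (hA : A ⊆ D)
    (hbdd : ∃ b, ∀ x ∈ A, ∀ y ∈ A, δ x y ≤ b) (h0 : genMNC δ D A = 0) {ε : ℝ} (hε : 0 < ε) :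
    ∃ (n : ℕ) (S : Fin n → Set X), A ⊆ ⋃ i, S i ∧ ∀ i, S i ⊆ D ∧
      ∀ x ∈ S i, ∀ y ∈ S i, δ x y ≤ ε := by
  have hne : {d : ℝ | 0 < d ∧ ∃ (n : ℕ) (S : Fin n → Set X), A ⊆ ⋃ i, S i ∧
      ∀ i, S i ⊆ D ∧ ∀ x ∈ S i, ∀ y ∈ S i, δ x y ≤ d}.Nonempty := by
    obtain ⟨b, hb⟩ := hbdd
    exact ⟨max b 1, by positivity, 1, fun _ => A, fun a ha => Set.mem_iUnion.2 ⟨0, ha⟩,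
      fun _ => ⟨hA, fun x hx y hy => (hb x hx y hy).trans (le_max_left _ _)⟩⟩
  obtain ⟨d, ⟨-, n, S, hcov, hS⟩, hdε⟩ := exists_lt_of_csInf_lt hne (b := ε) (by
    unfold genMNC at h0
    rw [h0]
    exact hε)
  exact ⟨n, S, hcov, fun i => ⟨(hS i).1, fun x hx y hy => ((hS i).2 x hx y hy).trans hdε.le⟩⟩

theorem totallyBounded_of_cover {A : Set X}
    (h : ∀ ε > 0, ∃ (n : ℕ) (S : Fin n → Set X), A ⊆ ⋃ i, S i ∧
      ∀ i, ∀ x ∈ S i ∩ A, ∀ y ∈ S i ∩ A, dist x y < ε) : TotallyBounded A := by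
  rw [Metric.totallyBounded_iff]
  intro ε hε
  obtain ⟨n, S, hcov, hS⟩ := h ε hε
  classical
  have hch : ∀ i : Fin n, ∃ c : X, S i ∩ A ⊆ Metric.ball c ε := by
    intro i
    rcases (S i ∩ A).eq_empty_or_nonempty with h0 | ⟨c, hc⟩
    · exact ⟨0, by simp [h0]⟩
    · exact ⟨c, fun x hx => hS i x hx c hc⟩
  choose c hc using hch
  refine ⟨Set.range c, Set.finite_range c, fun a ha => ?_⟩
  obtain ⟨i, hi⟩ := Set.mem_iUnion.1 (hcov ha)
  simp only [Set.mem_iUnion]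
  exact ⟨c i, ⟨i, rfl⟩, hc i ⟨hi, ha⟩⟩

/-- Under either condensing hypothesis, a sequence of asymptotically fixed points in an order
interval is totally bounded in norm. -/
theorem totallyBounded_of_condensing (hC : IsClosedCone C) (hnorm : IsNormalCone C)
    {f : X → X} (hf : Set.MapsTo f (interior C) (interior C))
    (hfn : TNonexpansiveOn C f (interior C))
    (hcond : GammaCondensing f (interior C) ∨ TauCondensing C f (interior C))
    {p : X} {K : ℝ} (hK : 1 ≤ K) (hp : p ∈ interior C) (hfp : f p = p) {y : ℕ → X}
    (hyK : ∀ n, TRel C K p (y n)) {s : ℕ → ℝ} (hs0 : ∀ n, 0 ≤ s n)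
    (hs : Tendsto s atTop (𝓝 0)) (hys : ∀ n, TRel C (1 + s n) (y n) (f (y n))) :
    TotallyBounded (Set.range y) := by
  obtain ⟨κ, hκ⟩ := hnorm
  have hK0 : 0 < K := by linarith
  have hKK : 1 ≤ K * K := by nlinarith
  have hyI : ∀ n, y n ∈ interior C := fun n => hC.mem_interior_of_le hp hK0 (hyK n).2
  have hfI : ∀ n, f (y n) ∈ interior C := fun n => hf (hyI n)
  have hfK : ∀ n, TRel C K p (f (y n)) := fun n => by
    have := hfn.trel hC hf hp (hyI n) hK (hyK n)
    rwa [hfp] at this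
  have hAD : Set.range y ⊆ interior C := by
    rintro _ ⟨n, rfl⟩
    exact hyI n
  have himg : f '' Set.range y = Set.range fun n => f (y n) := by
    rw [← Set.range_comp]
    rfl
  have hnb : ∀ u v : X, TRel C K p u → TRel C K p v →
      dist u v ≤ (2 * κ + 1) * K * ‖p‖ * (K * K - 1) := by
    intro u v hu hv
    rw [dist_eq_norm]
    refine TRel.norm_sub_le hC hκ (by linarith) hK0.le ?_ hu.1 hv.1
    have := hu.symm.mul hC hK0.le hK0.le hv
    rwa [add_sub_cancel]
  have htb : ∀ u v : X, u ∈ interior C → v ∈ interior C → TRel C K p u → TRel C K p v →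
      thompsonDist C u v ≤ Real.log (K * K) := by
    intro u v huI hvI hu hv
    rw [thompsonDist_le_iff hC huI hvI (Real.log_nonneg hKK), Real.exp_log (by linarith)]
    exact hu.symm.mul hC hK0.le hK0.le hv
  rcases hcond with ⟨-, hg⟩ | ⟨-, hg⟩
  · have hb : IsBounded (Set.range y) := by
      refine Metric.isBounded_iff.2 ⟨(2 * κ + 1) * K * ‖p‖ * (K * K - 1), ?_⟩
      rintro _ ⟨n, rfl⟩ _ ⟨m, rfl⟩
      exact hnb _ _ (hyK n) (hyK m)
    have hg' := hg _ hAD hb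
    rw [himg, kuratowski_eq, kuratowski_eq] at hg'
    have hle : genMNC dist Set.univ (Set.range y) ≤
        genMNC dist Set.univ (Set.range fun n => f (y n)) := by
      refine genMNC_range_le (fun x _ => (dist_self x).le) dist_comm
        (fun x _ y _ z _ => dist_triangle x y z) (fun _ => Set.mem_univ _)
        (fun _ => Set.mem_univ _) ?_ ⟨_, fun m n => hnb _ _ (hfK m) (hfK n)⟩
      intro η hη
      have hlim := hs.const_mul ((2 * κ + 1) * K * ‖p‖)
      rw [mul_zero] at hlim
      filter_upwards [hlim.eventually_le_const hη] with n hn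
      rw [dist_eq_norm]
      exact ((hys n).norm_sub_le hC hκ (hs0 n) hK0.le (hyK n).1 (hfK n).1).trans hn
    have h0 : genMNC dist Set.univ (Set.range y) = 0 := by
      refine le_antisymm (not_lt.1 fun h => (hg' h).not_ge hle) ?_
      exact Real.sInf_nonneg fun b hb => hb.1.le
    refine totallyBounded_of_cover fun ε hε => ?_
    obtain ⟨n, S, hcov, hS⟩ := exists_cover_of_genMNC_eq_zero (Set.subset_univ _)
      (Metric.isBounded_iff.1 hb |>.imp fun b hb x hx y hy => hb hx hy) h0 (half_pos hε)
    exact ⟨n, S, hcov, fun i x hx y hy =>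
      ((hS i).2 x hx.1 y hy.1).trans_lt (half_lt_self hε)⟩
  · have hb : TBounded C (Set.range y) := by
      refine ⟨Real.log (K * K), ?_⟩
      rintro _ ⟨n, rfl⟩ _ ⟨m, rfl⟩
      exact htb _ _ (hyI n) (hyI m) (hyK n) (hyK m)
    have hg' := hg _ hAD hb
    rw [himg] at hg'
    change 0 < genMNC (thompsonDist C) (interior C) _ →
      genMNC (thompsonDist C) (interior C) _ < genMNC (thompsonDist C) (interior C) _ at hg'
    have hle : genMNC (thompsonDist C) (interior C) (Set.range y) ≤
        genMNC (thompsonDist C) (interior C) (Set.range fun n => f (y n)) := by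
      refine genMNC_range_le (fun x hx => ?_) (thompsonDist_comm hC)
        (fun x hx y hy z hz => thompsonDist_triangle hC hx hy hz) hyI hfI ?_
        ⟨_, fun m n => htb _ _ (hfI m) (hfI n) (hfK m) (hfK n)⟩
      · rw [thompsonDist_le_iff hC hx hx le_rfl, Real.exp_zero]
        exact trel_self hC le_rfl (interior_subset hx)
      · intro η hη
        have h1 : 0 < Real.exp η - 1 := by linarith [Real.one_lt_exp_iff.2 hη]
        filter_upwards [hs.eventually_le_const h1] with n hn
        rw [thompsonDist_le_iff hC (hyI n) (hfI n) hη.le]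
        exact (hys n).mono hC (interior_subset (hyI n)) (interior_subset (hfI n)) (by linarith)
    have h0 : genMNC (thompsonDist C) (interior C) (Set.range y) = 0 := by
      refine le_antisymm (not_lt.1 fun h => (hg' h).not_ge hle) ?_
      exact Real.sInf_nonneg fun b hb => hb.1.le
    refine totallyBounded_of_cover fun ε hε => ?_
    -- `s₀` is small enough that `1 + s₀`-close points of the order interval are `ε`-close in norm.
    obtain ⟨s₀, hs₀, hs₀ε⟩ : ∃ s₀ : ℝ, 0 < s₀ ∧ (2 * κ + 1) * K * ‖p‖ * s₀ < ε := by
      have hlim : Tendsto (fun r : ℝ => (2 * κ + 1) * K * ‖p‖ * r) (𝓝[>] 0) (𝓝 0) := by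
        have : Continuous fun r : ℝ => (2 * κ + 1) * K * ‖p‖ * r := by fun_prop
        have h := this.tendsto 0
        rw [mul_zero] at h
        exact h.mono_left nhdsWithin_le_nhds
      obtain ⟨r, hr, hr0⟩ := ((hlim.eventually_lt_const hε).and self_mem_nhdsWithin).exists
      exact ⟨r, hr0, hr⟩
    obtain ⟨n, S, hcov, hS⟩ := exists_cover_of_genMNC_eq_zero hAD hb h0
      (Real.log_pos (by linarith : 1 < 1 + s₀))
    refine ⟨n, S, hcov, ?_⟩
    rintro i _ ⟨hxS, a, rfl⟩ _ ⟨hyS, b, rfl⟩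
    have h1 := (hS i).2 _ hxS _ hyS
    rw [thompsonDist_le_iff hC (hyI a) (hyI b) (Real.log_pos (by linarith)).le,
      Real.exp_log (by linarith)] at h1
    rw [dist_eq_norm]
    exact (h1.norm_sub_le hC hκ hs₀.le hK0.le (hyK a).1 (hyK b).1).trans_lt hs₀ε

end Aux

/-! ### The retraction -/

/-- The fixed point set of a `d_T`-nonexpansive, `γ`- or `τ`-condensing map
with a fixed point is a `d_T`-nonexpansive retract of `interior C`. -/
theorem stmt6 {X : Type*} [NormedAddCommGroup X] [NormedSpace ℝ X] [CompleteSpace X]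
    {C : Set X} (hC : IsClosedCone C) (hnorm : IsNormalCone C)
    (hne : (interior C).Nonempty) {f : X → X}
    (hf : Set.MapsTo f (interior C) (interior C))
    (hfn : TNonexpansiveOn C f (interior C))
    (hcond : GammaCondensing f (interior C) ∨ TauCondensing C f (interior C))
    (hfix : ∃ p ∈ interior C, f p = p) :
    ∃ r : X → X, Set.MapsTo r (interior C) (interior C) ∧
      TNonexpansiveOn C r (interior C) ∧
      r '' interior C = {x ∈ interior C | f x = x} ∧
      ∀ x ∈ interior C, f x = x → r x = x := by
  obtain ⟨p, hp, hfp⟩ := hfix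
  have hcont : ContinuousOn f (interior C) := hcond.elim (fun h => h.1) (fun h => h.1)
  set t : ℕ → ℝ := fun n => 1 / ((n : ℝ) + 1) with ht
  have ht0 : ∀ n, 0 < t n := fun n => by positivity
  have ht1 : ∀ n, t n ≤ 1 := fun n => by
    rw [ht]
    exact div_le_one_of_le₀ (by linarith [Nat.cast_nonneg (α := ℝ) n]) (by positivity)
  have htlim : Tendsto t atTop (𝓝 0) := tendsto_one_div_add_atTop_nhds_zero_nat
  let J : ℕ → X → X := fun n x => limUnder atTop fun k => (resStep f (t n) x)^[k] x
  have hJ : ∀ n x K, 1 ≤ K → TRel C K p x →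
      Tendsto (fun k => (resStep f (t n) x)^[k] x) atTop (𝓝 (J n x)) ∧ TRel C K p (J n x) ∧
        resStep f (t n) x (J n x) = J n x := by
    intro n x K hK hx
    obtain ⟨u, hu, h⟩ :=
      exists_resolvent_limit hC hnorm hf hfn hcont (ht0 n) (ht1 n) hK hp hfp hx
    have : J n x = u := hu.limUnder_eq
    rw [this]
    exact ⟨hu, h⟩
  let r : X → X := fun x => limUnder (hyperfilter ℕ : Filter ℕ) fun n => J n x
  have hr : ∀ x ∈ interior C,
      Tendsto (fun n => J n x) (hyperfilter ℕ : Filter ℕ) (𝓝 (r x)) ∧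
        r x ∈ interior C ∧ f (r x) = r x := by
    intro x hx
    obtain ⟨K, hK, hpx⟩ := exists_trel hC hp hx
    have hK0 : 0 < K := by linarith
    have hJK : ∀ n, TRel C K p (J n x) := fun n => (hJ n x K hK hpx).2.1
    have hJI : ∀ n, J n x ∈ interior C := fun n => hC.mem_interior_of_le hp hK0 (hJK n).2
    have hfK : ∀ n, TRel C K p (f (J n x)) := fun n => by
      have := hfn.trel hC hf hp (hJI n) hK (hJK n)
      rwa [hfp] at this
    have hclose : ∀ n, TRel C (1 + t n * (K * K)) (J n x) (f (J n x)) := fun n =>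
      trel_resolvent hC (ht0 n).le (hJ n x K hK hpx).2.2
        (hpx.symm.mul hC hK0.le hK0.le (hfK n)) ((hJK n).symm.mul hC hK0.le hK0.le (hfK n))
        (interior_subset (hf (hJI n))) (interior_subset hx)
    have hs0 : ∀ n, 0 ≤ t n * (K * K) := fun n => mul_nonneg (ht0 n).le (by positivity)
    have hslim : Tendsto (fun n => t n * (K * K)) atTop (𝓝 0) := by
      simpa using htlim.mul_const (K * K)
    have htot := totallyBounded_of_condensing hC hnorm hf hfn hcond hK hp hfp hJK hs0 hslim hclose
    have hcpt : IsCompact (closure (Set.range fun n => J n x)) :=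
      htot.closure.isCompact_of_isClosed isClosed_closure
    obtain ⟨L, -, hL⟩ := hcpt.ultrafilter_le_nhds ((hyperfilter ℕ).map fun n => J n x) (by
      rw [le_principal_iff]
      exact mem_of_superset (Ultrafilter.mem_map.2 (univ_mem' Set.mem_range_self)) subset_closure)
    have hL' : Tendsto (fun n => J n x) (hyperfilter ℕ : Filter ℕ) (𝓝 L) := hL
    have hrL : r x = L := hL'.limUnder_eq
    rw [hrL]
    have hLK : TRel C K p L := TRel.of_tendsto hC tendsto_const_nhds hL' hJK
    have hLI : L ∈ interior C := hC.mem_interior_of_le hp hK0 hLK.2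
    refine ⟨hL', hLI, ?_⟩
    have hfL : Tendsto (fun n => f (J n x)) (hyperfilter ℕ : Filter ℕ) (𝓝 (f L)) :=
      ((hcont L hLI).continuousAt (isOpen_interior.mem_nhds hLI)).tendsto.comp hL'
    have htU : Tendsto t (hyperfilter ℕ : Filter ℕ) (𝓝 0) := htlim.mono_left Nat.hyperfilter_le_atTop
    have hT : Tendsto (fun n => resStep f (t n) x (J n x)) (hyperfilter ℕ : Filter ℕ)
        (𝓝 ((1 - (0 : ℝ)) • f L + (0 : ℝ) • x)) :=
      ((htU.const_sub 1).smul hfL).add (htU.smul_const x)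
    rw [sub_zero, one_smul, zero_smul, add_zero] at hT
    refine tendsto_nhds_unique hT (hL'.congr fun n => ?_)
    exact ((hJ n x K hK hpx).2.2).symm
  have hrfix : ∀ x ∈ interior C, f x = x → r x = x := by
    intro x hx hfx
    obtain ⟨K, hK, hpx⟩ := exists_trel hC hp hx
    have hJx : ∀ n, J n x = x := by
      intro n
      refine tendsto_nhds_unique (hJ n x K hK hpx).1 ?_
      simp only [Function.iterate_fixed (resStep_fix hfx)]
      exact tendsto_const_nhds
    refine tendsto_nhds_unique (hr x hx).1 ?_
    simp only [hJx]
    exact tendsto_const_nhds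
  have hrm : Set.MapsTo r (interior C) (interior C) := fun x hx => (hr x hx).2.1
  refine ⟨r, hrm, ?_, ?_, hrfix⟩
  · refine tnonexpansiveOn_of_trel hC hrm fun x hx y hy β hb hxy => ?_
    refine TRel.of_tendsto hC (hr x hx).1 (hr y hy).1 fun n => ?_
    obtain ⟨K, hK, hpx⟩ := exists_trel hC hp hx
    obtain ⟨K', hK', hpy⟩ := exists_trel hC hp hy
    refine TRel.of_tendsto hC (hJ n x K hK hpx).1 (hJ n y K' hK' hpy).1 fun k => ?_
    induction k with
    | zero => exact hxy
    | succ k ih =>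
      rw [Function.iterate_succ_apply', Function.iterate_succ_apply']
      refine TRel.resStep hC hf hfn (ht0 n).le (ht1 n) hb ?_ ?_ hxy ih
      · exact hC.mem_interior_of_le hp (by linarith)
          (trel_iterate hC hf hfn (ht0 n).le (ht1 n) hK hp hfp hpx k).2
      · exact hC.mem_interior_of_le hp (by linarith)
          (trel_iterate hC hf hfn (ht0 n).le (ht1 n) hK' hp hfp hpy k).2
  · ext z
    constructor
    · rintro ⟨x, hx, rfl⟩
      exact (hr x hx).2
    · rintro ⟨hz, hfz⟩
      exact ⟨z, hz, hrfix z hz hfz⟩
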